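/- Let μ₁, μ₂, μ₃ : ℂ³ → ℝ be as defined. Then all pairwise Poisson brackets vanish: {μ_j, μ_k} = 0 for all j, k ∈ {1, 2, 3}, where for smooth f, g : ℂ³ → ℝ the Poisson bracket is {f, g} := Σ_{k=1}^{3} (∂f/∂x_k · ∂g/∂y_k − ∂f/∂y_k · ∂g/∂x_k) in the real coordinates z_k = x_k + i y_k on ℂ³ ≅ ℝ⁶. -/

import Mathlib

open Real

/-- Partial derivative `∂f/∂x_k` of `f : ℝ³ × ℝ³ → ℝ` in the real coordinates
`(x₁, x₂, x₃, y₁, y₂, y₃)` on `ℂ³ ≅ ℝ⁶`. -/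
noncomputable def pdx (f : (Fin 3 → ℝ) → (Fin 3 → ℝ) → ℝ) (k : Fin 3)
    (x y : Fin 3 → ℝ) : ℝ :=
  deriv (fun t => f (Function.update x k t) y) (x k)

/-- Partial derivative `∂f/∂y_k`. -/
noncomputable def pdy (f : (Fin 3 → ℝ) → (Fin 3 → ℝ) → ℝ) (k : Fin 3)
    (x y : Fin 3 → ℝ) : ℝ :=
  deriv (fun t => f x (Function.update y k t)) (y k)

/-- The Poisson bracket `{f,g} = Σ_k (∂f/∂x_k·∂g/∂y_k − ∂f/∂y_k·∂g/∂x_k)`. -/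
noncomputable def poisson (f g : (Fin 3 → ℝ) → (Fin 3 → ℝ) → ℝ)
    (x y : Fin 3 → ℝ) : ℝ :=
  ∑ k, (pdx f k x y * pdy g k x y - pdy f k x y * pdx g k x y)

/-- The functions `μ₁, μ₂, μ₃ : ℂ³ → ℝ` (in real coordinates `z_j = x_j + i y_j`):
`μ₁ = x₃ − (x₁² + y₁²)/2`, `μ₂ = x₃ − (x₂² + y₂²)/2`,
`μ₃ = Im(z₁z₂e^{z₃}) = e^{x₃}[(x₁y₂ + x₂y₁)cos y₃ + (x₁x₂ − y₁y₂)sin y₃]`. -/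
noncomputable def mu : Fin 3 → (Fin 3 → ℝ) → (Fin 3 → ℝ) → ℝ :=
  ![fun x y => x 2 - (x 0 ^ 2 + y 0 ^ 2) / 2,
    fun x y => x 2 - (x 1 ^ 2 + y 1 ^ 2) / 2,
    fun x y => Real.exp (x 2) *
      ((x 0 * y 1 + x 1 * y 0) * Real.cos (y 2) + (x 0 * x 1 - y 0 * y 1) * Real.sin (y 2))]

/-!
Up to sign, `{μ₁, ·}` and `{μ₂, ·}` differentiate along the flows `z_a ↦ e^{iθ} z_a`,
`z₃ ↦ z₃ - iθ`, with `a = 1, 2`. All three `μ_k` are constant along these flows, so their brackets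
with `μ₁` and `μ₂` vanish; antisymmetry does the rest.
-/

theorem hasDerivAt_update_of_hasDerivAt {𝕜 ι : Type*} [NontriviallyNormedField 𝕜] [Finite ι]
    [DecidableEq ι] {E : ι → Type*} [∀ i, NormedAddCommGroup (E i)] [∀ i, NormedSpace 𝕜 (E i)]
    {u : 𝕜 → ∀ i, E i} {u' : ∀ i, E i} {a : ι} {v : 𝕜 → E a} {v' : E a} {t : 𝕜}
    (hu : HasDerivAt u u' t) (hv : HasDerivAt v v' t) :
    HasDerivAt (fun s => Function.update (u s) a (v s)) (Function.update u' a v') t := by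
  refine hasDerivAt_pi.2 fun i => ?_
  rcases eq_or_ne i a with rfl | hi
  · simpa only [Function.update_self] using hv
  · simpa only [Function.update_of_ne hi] using hasDerivAt_pi.1 hu i

section Poisson

variable (f g : (Fin 3 → ℝ) → (Fin 3 → ℝ) → ℝ) (x y : Fin 3 → ℝ)

theorem poisson_self : poisson f f x y = 0 :=
  Finset.sum_eq_zero fun _ _ => by ring

theorem poisson_antisymm : poisson f g x y = -poisson g f x y := by
  simp only [poisson, ← Finset.sum_neg_distrib]
  exact Finset.sum_congr rfl fun _ _ => by ring

variable {g x y}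

theorem pdx_eq_fderiv (hg : DifferentiableAt ℝ (Function.uncurry g) (x, y)) (k : Fin 3) :
    pdx g k x y = fderiv ℝ (Function.uncurry g) (x, y) (Pi.single k 1, 0) := by
  have hline := (hasDerivAt_update x k (x k)).prodMk (hasDerivAt_const (x k) y)
  exact (hg.hasFDerivAt.comp_hasDerivAt_of_eq (x k) hline (by simp)).deriv

theorem pdy_eq_fderiv (hg : DifferentiableAt ℝ (Function.uncurry g) (x, y)) (k : Fin 3) :
    pdy g k x y = fderiv ℝ (Function.uncurry g) (x, y) (0, Pi.single k 1) := by
  have hline := (hasDerivAt_const (y k) x).prodMk (hasDerivAt_update y k (y k))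
  exact (hg.hasFDerivAt.comp_hasDerivAt_of_eq (y k) hline (by simp)).deriv

end Poisson

/-- The Hamiltonian `x_c - |z_a|² / 2` generating the rotation of `z_a` coupled to the imaginary
translation of `z_c`; `μ₁` and `μ₂` are the cases `(a, c) = (1, 3)` and `(2, 3)`, with indices
shifted down by one in `Fin 3`. -/
noncomputable def circleMoment (a c : Fin 3) (x y : Fin 3 → ℝ) : ℝ :=
  x c - (x a ^ 2 + y a ^ 2) / 2

/-- The action `z_a ↦ e^{iθ} z_a`, `z_c ↦ z_c - iθ` of `θ : ℝ` in the real coordinates `(x, y)`,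
meaningful for `a ≠ c`. -/
noncomputable def circleAction (a c : Fin 3) (θ : ℝ) (p : (Fin 3 → ℝ) × (Fin 3 → ℝ)) :
    (Fin 3 → ℝ) × (Fin 3 → ℝ) :=
  (Function.update p.1 a (cos θ * p.1 a - sin θ * p.2 a),
    Function.update (Function.update p.2 a (sin θ * p.1 a + cos θ * p.2 a)) c (p.2 c - θ))

section CircleAction

variable (a c : Fin 3) (g : (Fin 3 → ℝ) → (Fin 3 → ℝ) → ℝ) (x y : Fin 3 → ℝ)

theorem differentiable_circleMoment :
    Differentiable ℝ (Function.uncurry (circleMoment a c)) := by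
  unfold Function.uncurry circleMoment
  fun_prop

theorem pdx_circleMoment (k : Fin 3) :
    pdx (circleMoment a c) k x y =
      (Pi.single k 1 : Fin 3 → ℝ) c - x a * (Pi.single k 1 : Fin 3 → ℝ) a := by
  have hcoord := hasDerivAt_pi.1 (hasDerivAt_update x k (x k))
  have hderiv := (hcoord c).sub ((((hcoord a).pow 2).add_const (y a ^ 2)).div_const 2)
  refine hderiv.deriv.trans ?_
  simp only [Function.update_eq_self]
  ring

theorem pdy_circleMoment (k : Fin 3) :
    pdy (circleMoment a c) k x y = -(y a * (Pi.single k 1 : Fin 3 → ℝ) a) := by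
  have hcoord := hasDerivAt_pi.1 (hasDerivAt_update y k (y k))
  have hderiv := ((((hcoord a).pow 2).const_add (x a ^ 2)).div_const 2).const_sub (x c)
  refine hderiv.deriv.trans ?_
  simp only [Function.update_eq_self]
  ring

theorem poisson_circleMoment :
    poisson (circleMoment a c) g x y =
      y a * pdx g a x y - x a * pdy g a x y + pdy g c x y := by
  simp only [poisson, pdx_circleMoment, pdy_circleMoment, Pi.single_apply, sub_mul, neg_mul,
    mul_ite, ite_mul, mul_one, mul_zero, zero_mul, one_mul, Finset.sum_sub_distrib,
    Finset.sum_neg_distrib, Finset.sum_ite_eq, Finset.mem_univ, if_true]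
  ring

theorem circleAction_zero (p : (Fin 3 → ℝ) × (Fin 3 → ℝ)) :
    circleAction a c 0 p = p := by
  simp [circleAction]

variable {a c}

theorem hasDerivAt_circleAction (hac : a ≠ c) :
    HasDerivAt (fun θ => circleAction a c θ (x, y))
      (Pi.single a (-y a), Pi.single a (x a) - Pi.single c 1) 0 := by
  have hre : HasDerivAt (fun θ => cos θ * x a - sin θ * y a) (-y a) 0 := by
    simpa using ((hasDerivAt_cos 0).mul_const (x a)).fun_sub ((hasDerivAt_sin 0).mul_const (y a))
  have him : HasDerivAt (fun θ => sin θ * x a + cos θ * y a) (x a) 0 := by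
    simpa using ((hasDerivAt_sin 0).mul_const (x a)).fun_add ((hasDerivAt_cos 0).mul_const (y a))
  have htranslation : HasDerivAt (fun θ => y c - θ) (-1) 0 := (hasDerivAt_id 0).const_sub (y c)
  have hvelocity : (Pi.single a (x a) - Pi.single c 1 : Fin 3 → ℝ) =
      Function.update (Pi.single a (x a)) c (-1) := by
    ext k
    rcases eq_or_ne k c with rfl | hk
    · simp [hac.symm]
    · simp [hk]
  rw [hvelocity]
  exact (hasDerivAt_update_of_hasDerivAt (hasDerivAt_const 0 x) hre).prodMk
    (hasDerivAt_update_of_hasDerivAt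
      (hasDerivAt_update_of_hasDerivAt (hasDerivAt_const 0 y) him) htranslation)

variable {g x y}

theorem poisson_circleMoment_eq_neg_deriv (hac : a ≠ c)
    (hg : DifferentiableAt ℝ (Function.uncurry g) (x, y)) :
    poisson (circleMoment a c) g x y =
      -deriv (fun θ => Function.uncurry g (circleAction a c θ (x, y))) 0 := by
  have hvelocity : ((Pi.single a (-y a), Pi.single a (x a) - Pi.single c 1) :
      (Fin 3 → ℝ) × (Fin 3 → ℝ)) =
      -y a • (Pi.single a 1, 0) + x a • (0, Pi.single a 1) - (0, Pi.single c 1) := by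
    simp [← Pi.single_smul, Pi.single_neg]
  have hflow : HasDerivAt (fun θ => Function.uncurry g (circleAction a c θ (x, y)))
      (fderiv ℝ (Function.uncurry g) (x, y)
        (Pi.single a (-y a), Pi.single a (x a) - Pi.single c 1)) 0 :=
    hg.hasFDerivAt.comp_hasDerivAt_of_eq 0 (hasDerivAt_circleAction x y hac)
      (circleAction_zero a c (x, y)).symm
  rw [hflow.deriv, hvelocity, map_sub, map_add, map_smul, map_smul, ← pdx_eq_fderiv hg,
    ← pdy_eq_fderiv hg, ← pdy_eq_fderiv hg, poisson_circleMoment, smul_eq_mul, smul_eq_mul]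
  ring

theorem poisson_circleMoment_eq_zero_of_invariant (hac : a ≠ c)
    (hg : DifferentiableAt ℝ (Function.uncurry g) (x, y))
    (hinv : ∀ θ, Function.uncurry g (circleAction a c θ (x, y)) = g x y) :
    poisson (circleMoment a c) g x y = 0 := by
  simp only [poisson_circleMoment_eq_neg_deriv hac hg, hinv, deriv_const, neg_zero]

theorem circleMoment_circleAction {b : Fin 3} (hac : a ≠ c) (hbc : b ≠ c) (θ : ℝ)
    (p : (Fin 3 → ℝ) × (Fin 3 → ℝ)) :
    Function.uncurry (circleMoment b c) (circleAction a c θ p) =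
      Function.uncurry (circleMoment b c) p := by
  rcases eq_or_ne b a with rfl | hba
  · simp only [Function.uncurry, circleMoment, circleAction, Function.update_self,
      Function.update_of_ne hac, Function.update_of_ne hac.symm]
    linear_combination -(p.1 b ^ 2 + p.2 b ^ 2) / 2 * cos_sq_add_sin_sq θ
  · simp only [Function.uncurry, circleMoment, circleAction,
      Function.update_of_ne hbc, Function.update_of_ne hba, Function.update_of_ne hac.symm]

end CircleAction

theorem mu_eq_circleMoment {a : Fin 3} (ha : a ≠ 2) : mu a = circleMoment a 2 := by
  obtain rfl | rfl : a = 0 ∨ a = 1 := by lia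
  all_goals rfl

theorem mu_two_apply (x y : Fin 3 → ℝ) :
    mu 2 x y = exp (x 2) *
      ((x 0 * y 1 + x 1 * y 0) * cos (y 2) + (x 0 * x 1 - y 0 * y 1) * sin (y 2)) :=
  rfl

theorem differentiable_mu (k : Fin 3) : Differentiable ℝ (Function.uncurry (mu k)) := by
  rcases eq_or_ne k 2 with rfl | hk
  · simp only [Function.uncurry_def, mu_two_apply]
    fun_prop
  · rw [mu_eq_circleMoment hk]
    exact differentiable_circleMoment k 2

theorem mu_two_circleAction {a : Fin 3} (ha : a ≠ 2) (θ : ℝ)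
    (p : (Fin 3 → ℝ) × (Fin 3 → ℝ)) :
    Function.uncurry (mu 2) (circleAction a 2 θ p) = Function.uncurry (mu 2) p := by
  obtain rfl | rfl : a = 0 ∨ a = 1 := by lia
  -- In complex terms, `(e^{iθ} z_a) z_b e^{z₃ - iθ} = z_a z_b e^{z₃}`.
  all_goals
    simp only [Function.uncurry_def, mu_two_apply, circleAction, Function.update_self, ne_eq,
      Function.update_of_ne, Fin.reduceEq, not_false_eq_true, cos_sub, sin_sub]
    linear_combination exp (p.1 2) * ((p.1 0 * p.2 1 + p.1 1 * p.2 0) * cos (p.2 2) +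
      (p.1 0 * p.1 1 - p.2 0 * p.2 1) * sin (p.2 2)) * cos_sq_add_sin_sq θ

theorem mu_circleAction {a : Fin 3} (ha : a ≠ 2) (k : Fin 3) (θ : ℝ)
    (p : (Fin 3 → ℝ) × (Fin 3 → ℝ)) :
    Function.uncurry (mu k) (circleAction a 2 θ p) = Function.uncurry (mu k) p := by
  rcases eq_or_ne k 2 with rfl | hk
  · exact mu_two_circleAction ha θ p
  · rw [mu_eq_circleMoment hk]
    exact circleMoment_circleAction ha hk θ p

theorem poisson_mu_of_ne_two {a : Fin 3} (ha : a ≠ 2) (k : Fin 3) (x y : Fin 3 → ℝ) :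
    poisson (mu a) (mu k) x y = 0 := by
  rw [mu_eq_circleMoment ha]
  exact poisson_circleMoment_eq_zero_of_invariant ha (differentiable_mu k (x, y))
    fun θ => mu_circleAction ha k θ (x, y)

/-- All pairwise Poisson brackets of `μ₁, μ₂, μ₃` vanish. -/
theorem poisson_brackets_vanish (x y : Fin 3 → ℝ) (j k : Fin 3) :
    poisson (mu j) (mu k) x y = 0 := by
  rcases eq_or_ne j 2 with rfl | hj
  · rcases eq_or_ne k 2 with rfl | hk
    · exact poisson_self (mu 2) x y
    · rw [poisson_antisymm, poisson_mu_of_ne_two hk, neg_zero]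
  · exact poisson_mu_of_ne_two hj k x y
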